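/- arXiv:2406.10850 — 3 statements merged into one kernel-verified Lean document; each statement's English description precedes it below -/
import Mathlib

section
/- Let b be a prime, s ≥ 1, t ≥ 0 and m ≥ t be integers, and let C_1,…,C_s be generating matrices of a digital (t,s)-sequence over F_b. Let 0 = w_1 ≤ w_2 ≤ ⋯ ≤ w_s be reduction indices and let C̃_1^{(m)},…,C̃_s^{(m)} be the corresponding column reduced matrices. Then ρ_m(C̃_1^{(m)},…,C̃_s^{(m)}) ≥ max{0, m − w_s − t}; that is, if m − w_s − t ≥ 0, then for every choice of nonnegative integers d_1,…,d_s with d_1+⋯+d_s = m − w_s − t, the family consisting of the first d_1 rows of C̃_1^{(m)}, …, and the first d_s rows of C̃_s^{(m)} is linearly independent over F_b. -/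
open Finset

/-- The family consisting of the first `d j` rows of each of the matrices `C j`
(a row index `≥ m` yields the zero vector). -/
def rowFamily {b s m : ℕ} (C : Fin s → Matrix (Fin m) (Fin m) (ZMod b))
    (d : Fin s → ℕ) : (Σ j : Fin s, Fin (d j)) → (Fin m → ZMod b) :=
  fun p r => if h : (p.2 : ℕ) < m then C p.1 ⟨(p.2 : ℕ), h⟩ r else 0

/-- The first `d j` rows of the matrices `C j` are linearly independent over `𝔽_b`. -/
def RowsLI {b s m : ℕ} (C : Fin s → Matrix (Fin m) (Fin m) (ZMod b))
    (d : Fin s → ℕ) : Prop :=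
  LinearIndependent (ZMod b) (rowFamily C d)

/-- The linear independence parameter `ρ_m(C_1, …, C_s)`: the largest `ρ` such that for
every choice of nonnegative integers `d_1 + ⋯ + d_s = ρ`, the corresponding first rows
of the matrices are linearly independent. -/
noncomputable def rho {b s m : ℕ} (C : Fin s → Matrix (Fin m) (Fin m) (ZMod b)) : ℕ :=
  sSup {ρ : ℕ | ∀ d : Fin s → ℕ, ∑ j, d j = ρ → RowsLI C d}

/-- Left upper `k × k` submatrix of an infinite matrix. -/
def upperLeft {b : ℕ} (C : Matrix ℕ ℕ (ZMod b)) (k : ℕ) :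
    Matrix (Fin k) (Fin k) (ZMod b) :=
  Matrix.of fun i r => C (i : ℕ) (r : ℕ)

/-- Column reduction with reduction index `w`: the first `m - min m w` columns are kept,
the last `min m w` columns are set to zero. -/
def colReduce {b m : ℕ} (C : Matrix (Fin m) (Fin m) (ZMod b)) (w : ℕ) :
    Matrix (Fin m) (Fin m) (ZMod b) :=
  Matrix.of fun i r => if (r : ℕ) < m - min m w then C i r else 0

/-- `C` is a family of generating matrices of a digital `(t,s)`-sequence over `𝔽_b`. -/
def IsDigitalSeq {b s : ℕ} (C : Fin s → Matrix ℕ ℕ (ZMod b)) (t : ℕ) : Prop :=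
  ∀ k : ℕ, max t 1 ≤ k → k - t ≤ rho (fun j => upperLeft (C j) k)

/-!
Let `W` bound all the reduction indices and put `k = m - W`. Column reduction leaves the first `k`
columns of every matrix untouched, so truncating the rows of the reduced matrices to their first
`k` entries gives the corresponding rows of the upper left `k × k` submatrices. Truncation is
linear, so independence lifts from the truncated rows to the reduced ones, and the
`(t, s)`-sequence property at level `k` provides it for any `k - t` rows.
-/

section Rho

variable {b s m : ℕ} {C : Fin s → Matrix (Fin m) (Fin m) (ZMod b)} {d e : Fin s → ℕ}

theorem RowsLI.mono (h : RowsLI C e) (hde : d ≤ e) : RowsLI C d :=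
  LinearIndependent.comp h (Sigma.map id fun j => Fin.castLE (hde j))
    (Function.injective_id.sigma_map fun j => Fin.castLE_injective (hde j))

theorem rowsLI_zero : RowsLI C 0 :=
  haveI : IsEmpty (Σ j : Fin s, Fin ((0 : Fin s → ℕ) j)) := ⟨fun p => p.2.elim0⟩
  linearIndependent_empty_type

variable [Nontrivial (ZMod b)]

theorem RowsLI.sum_le (h : RowsLI C d) : ∑ j, d j ≤ m := by
  simpa only [Fintype.card_sigma, Fintype.card_fin, Module.finrank_fin_fun] using
    LinearIndependent.fintype_card_le_finrank h

variable [NeZero s]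

theorem bddAbove_setOf_rowsLI :
    BddAbove {n : ℕ | ∀ d : Fin s → ℕ, ∑ j, d j = n → RowsLI C d} := by
  refine ⟨m, fun n hn => ?_⟩
  have hsum : ∑ j, (Pi.single 0 n : Fin s → ℕ) j = n := Fintype.sum_pi_single' 0 n
  exact hsum ▸ (hn _ hsum).sum_le

theorem rowsLI_of_sum_eq_rho (hd : ∑ j, d j = rho C) : RowsLI C d := by
  have hmem : rho C ∈ {n : ℕ | ∀ d : Fin s → ℕ, ∑ j, d j = n → RowsLI C d} := by
    refine Nat.sSup_mem ⟨0, fun d hd => ?_⟩ bddAbove_setOf_rowsLI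
    obtain rfl : d = 0 := funext fun j => sum_eq_zero_iff.mp hd j (mem_univ j)
    exact rowsLI_zero
  exact hmem d hd

theorem rowsLI_of_sum_le_rho (hd : ∑ j, d j ≤ rho C) : RowsLI C d := by
  let e : Fin s → ℕ := d + Pi.single 0 (rho C - ∑ j, d j)
  have he : ∑ j, e j = rho C := by
    simp only [e, Pi.add_apply, sum_add_distrib, Fintype.sum_pi_single', Nat.add_sub_cancel' hd]
  exact (rowsLI_of_sum_eq_rho he).mono le_self_add

theorem le_rho_iff {n : ℕ} : n ≤ rho C ↔ ∀ d : Fin s → ℕ, ∑ j, d j = n → RowsLI C d :=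
  ⟨fun hn _ hd => rowsLI_of_sum_le_rho (hd.trans_le hn), le_csSup bddAbove_setOf_rowsLI⟩

end Rho

section ColReduce

variable {b s k m : ℕ} {C : Fin s → Matrix ℕ ℕ (ZMod b)} {w d : Fin s → ℕ}

theorem funLeft_comp_rowFamily_colReduce (hkm : k ≤ m) (hk : ∀ j, k ≤ m - w j)
    (hd : ∀ j, d j ≤ k) :
    LinearMap.funLeft (ZMod b) (ZMod b) (Fin.castLE hkm) ∘
        rowFamily (fun j => colReduce (upperLeft (C j) m) (w j)) d =
      rowFamily (fun j => upperLeft (C j) k) d := by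
  funext ⟨j, i⟩ r
  have hik : (i : ℕ) < k := i.isLt.trans_le (hd j)
  have hr : (r : ℕ) < m - min m (w j) := by have := hk j; omega
  simp only [Function.comp_apply, LinearMap.funLeft_apply, rowFamily, colReduce, upperLeft,
    Matrix.of_apply, Fin.val_castLE, dif_pos (hik.trans_le hkm), dif_pos hik, if_pos hr]

variable [Nontrivial (ZMod b)] [NeZero s]

theorem RowsLI.colReduce (h : RowsLI (fun j => upperLeft (C j) k) d)
    (hk : ∀ j, k ≤ m - w j) :
    RowsLI (fun j => colReduce (upperLeft (C j) m) (w j)) d := by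
  have hkm : k ≤ m := (hk 0).trans (Nat.sub_le m (w 0))
  have hd (j : Fin s) : d j ≤ k :=
    (single_le_sum (fun _ _ => Nat.zero_le _) (mem_univ j)).trans h.sum_le
  refine LinearIndependent.of_comp (LinearMap.funLeft (ZMod b) (ZMod b) (Fin.castLE hkm)) ?_
  rw [funLeft_comp_rowFamily_colReduce hkm hk hd]
  exact h

theorem rho_upperLeft_le_rho_colReduce (hk : ∀ j, k ≤ m - w j) :
    rho (fun j => upperLeft (C j) k) ≤ rho (fun j => colReduce (upperLeft (C j) m) (w j)) :=
  le_rho_iff.mpr fun _ hd => (rowsLI_of_sum_eq_rho hd).colReduce hk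

end ColReduce

theorem IsDigitalSeq.sub_le_rho {b s t : ℕ} {C : Fin s → Matrix ℕ ℕ (ZMod b)}
    (hC : IsDigitalSeq C t) (k : ℕ) : k - t ≤ rho (fun j => upperLeft (C j) k) := by
  rcases le_or_gt k t with hkt | htk
  · simp only [Nat.sub_eq_zero_of_le hkt, Nat.zero_le]
  · exact hC k (by omega)

theorem col_reduced_rho_lower_bound_general {b s t m W : ℕ} (hb : b ≠ 1) (hs : 1 ≤ s)
    (C : Fin s → Matrix ℕ ℕ (ZMod b)) (hC : IsDigitalSeq C t)
    (w : Fin s → ℕ) (hw : ∀ j, w j ≤ W) :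
    max 0 ((m : ℤ) - W - t) ≤ (rho (fun j => colReduce (upperLeft (C j) m) (w j)) : ℤ) ∧
    (W + t ≤ m → ∀ d : Fin s → ℕ, ∑ j, d j = m - W - t →
      RowsLI (fun j => colReduce (upperLeft (C j) m) (w j)) d) := by
  have : Nontrivial (ZMod b) := ZMod.nontrivial_iff.mpr hb
  have : NeZero s := NeZero.of_pos hs
  have hrho : m - W - t ≤ rho (fun j => colReduce (upperLeft (C j) m) (w j)) :=
    (hC.sub_le_rho (m - W)).trans
      (rho_upperLeft_le_rho_colReduce fun j => Nat.sub_le_sub_left (hw j) m)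
  exact ⟨by omega, fun _ => le_rho_iff.mp hrho⟩

/-- Theorem (lower bound in Theorem 1): for a digital `(t,s)`-sequence and reduction
indices `0 = w_1 ≤ … ≤ w_s`, one has
`ρ_m(C̃_1^{(m)}, …, C̃_s^{(m)}) ≥ max {0, m - w_s - t}`; that is, if `m - w_s - t ≥ 0`,
then any choice of first rows with `d_1 + ⋯ + d_s = m - w_s - t` is linearly independent. -/
theorem col_reduced_rho_lower_bound {b s t m : ℕ} (hb : b.Prime) (hs : 1 ≤ s)
    (hm : t ≤ m) (C : Fin s → Matrix ℕ ℕ (ZMod b)) (hC : IsDigitalSeq C t)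
    (w : Fin s → ℕ) (hw0 : w ⟨0, by omega⟩ = 0) (hwmono : Monotone w) :
    max 0 ((m : ℤ) - (w ⟨s - 1, by omega⟩ : ℕ) - (t : ℕ)) ≤
      (rho (fun j => colReduce (upperLeft (C j) m) (w j)) : ℤ) ∧
    (w ⟨s - 1, by omega⟩ + t ≤ m →
      ∀ d : Fin s → ℕ, ∑ j, d j = m - w ⟨s - 1, by omega⟩ - t →
        RowsLI (fun j => colReduce (upperLeft (C j) m) (w j)) d) :=
  col_reduced_rho_lower_bound_general hb.ne_one hs C hC w fun j =>
    hwmono (Fin.mk_le_mk.mpr (Nat.le_sub_one_of_lt j.isLt))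
end

section
/- Let b be a prime, s ≥ 1 and m ≥ 1 be integers, and let C_1,…,C_s be generating matrices of a digital (0,s)-sequence over F_b, i.e., ρ_k(C_1^{(k)},…,C_s^{(k)}) = k for every integer k ≥ 1. Let 0 = w_1 ≤ w_2 ≤ ⋯ ≤ w_s be reduction indices with w_s < m, and let C̃_1^{(m)},…,C̃_s^{(m)} be the corresponding column reduced matrices. Then ρ_m(C̃_1^{(m)},…,C̃_s^{(m)}) = m − w_s. -/
open Finset

/-!
Put `n = m - w_s`. The first `ρ` rows of `C̃_s` vanish outside the first `n` columns, so they can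
only be independent if `ρ ≤ n`. Conversely, every reduction keeps the first `n` columns, so the left
upper `n × n` blocks of the `C̃_j` are those of the `C_j`; rows that are independent after
truncation to `n` coordinates are independent, whence `n = ρ_n(C_1, …, C_s) ≤ ρ_m(C̃_1, …, C̃_s)`.
-/

theorem card_le_card_of_linearIndependent_of_eq_zero {R ι κ : Type*} [Ring R]
    [StrongRankCondition R] [Fintype ι] {v : ι → κ → R} (hv : LinearIndependent R v)
    (S : Finset κ) (hS : ∀ i, ∀ k ∉ S, v i k = 0) : Fintype.card ι ≤ #S := by
  have v_eq : v = Function.ExtendByZero.linearMap R ((↑) : S → κ) ∘ fun i k => v i k := by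
    funext i k
    by_cases hk : k ∈ S
    · exact (Subtype.val_injective.extend_apply (fun k : S => v i k) 0 ⟨k, hk⟩).symm
    · simp [hS i k hk, hk]
  rw [v_eq] at hv
  simpa using (hv.of_comp _).fintype_card_le_finrank

theorem colReduce_apply_of_le {b m w : ℕ} (C : Matrix (Fin m) (Fin m) (ZMod b)) (i : Fin m)
    {r : Fin m} (hr : m - w ≤ r) : colReduce C w i r = 0 :=
  if_neg (by omega)

theorem submatrix_castLE_colReduce_upperLeft {b m n w : ℕ} (C : Matrix ℕ ℕ (ZMod b))
    (hn : n ≤ m - w) :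
    (colReduce (upperLeft C m) w).submatrix (Fin.castLE (hn.trans (Nat.sub_le m w)))
      (Fin.castLE (hn.trans (Nat.sub_le m w))) = upperLeft C n := by
  ext i r
  have hr : (r : ℕ) < m - min m w := by omega
  simp only [colReduce, upperLeft, Matrix.submatrix_apply, Matrix.of_apply, Fin.val_castLE,
    if_pos hr]

section Rho

variable {b s m n : ℕ} [Nontrivial (ZMod b)] {C : Fin s → Matrix (Fin m) (Fin m) (ZMod b)}

theorem RowsLI.le_of_col_eq_zero {d : Fin s → ℕ} (h : RowsLI C d) {j : Fin s}
    (h0 : ∀ i r : Fin m, n ≤ r → C j i r = 0) : d j ≤ n := by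
  have rows_li : LinearIndependent (ZMod b) fun i : Fin (d j) => rowFamily C d ⟨j, i⟩ :=
    LinearIndependent.comp h (Sigma.mk j) sigma_mk_injective
  have rows_eq_zero (i : Fin (d j)) (r : Fin m)
      (hr : r ∉ ({r | (r : ℕ) < n} : Finset (Fin m))) : rowFamily C d ⟨j, i⟩ r = 0 := by
    have hnr : n ≤ r := by simpa using hr
    simp only [rowFamily, h0 _ r hnr, dite_eq_ite, ite_self]
  calc d j = Fintype.card (Fin (d j)) := (Fintype.card_fin _).symm
    _ ≤ #{r : Fin m | (r : ℕ) < n} :=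
      card_le_card_of_linearIndependent_of_eq_zero rows_li _ rows_eq_zero
    _ ≤ n := by rw [Fin.card_filter_val_lt]; exact min_le_right _ _

theorem RowsLI.le_size {d : Fin s → ℕ} (h : RowsLI C d) (j : Fin s) : d j ≤ m :=
  h.le_of_col_eq_zero fun _ r hr => absurd r.isLt hr.not_gt

theorem RowsLI.of_submatrix_castLE (hn : n ≤ m) {d : Fin s → ℕ}
    (h : RowsLI (fun j => (C j).submatrix (Fin.castLE hn) (Fin.castLE hn)) d) : RowsLI C d := by
  refine LinearIndependent.of_comp (LinearMap.funLeft (ZMod b) (ZMod b) (Fin.castLE hn)) ?_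
  convert (show LinearIndependent (ZMod b) _ from h) using 1
  funext ⟨j, i⟩ r
  have hi : (i : ℕ) < n := i.isLt.trans_le (h.le_size j)
  simp only [Function.comp_apply, LinearMap.funLeft_apply, rowFamily, dif_pos hi,
    dif_pos (hi.trans_le hn), Matrix.submatrix_apply, Fin.castLE_mk]

theorem le_of_forall_rowsLI_of_col_eq_zero {ρ : ℕ}
    (hρ : ∀ d : Fin s → ℕ, ∑ j, d j = ρ → RowsLI C d) (l : Fin s)
    (h0 : ∀ i r : Fin m, n ≤ r → C l i r = 0) : ρ ≤ n := by
  simpa using (hρ (Pi.single l ρ) (by simp)).le_of_col_eq_zero h0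

theorem rho_le_of_col_eq_zero (l : Fin s) (h0 : ∀ i r : Fin m, n ≤ r → C l i r = 0) :
    rho C ≤ n :=
  csSup_le' fun _ hρ => le_of_forall_rowsLI_of_col_eq_zero hρ l h0

theorem rho_le_rho_of_rowsLI_imp [Nonempty (Fin s)]
    {A : Fin s → Matrix (Fin n) (Fin n) (ZMod b)} (h : ∀ d, RowsLI A d → RowsLI C d) :
    rho A ≤ rho C := by
  have bdd : BddAbove {ρ : ℕ | ∀ d : Fin s → ℕ, ∑ j, d j = ρ → RowsLI C d} :=
    ⟨m, fun _ hρ => le_of_forall_rowsLI_of_col_eq_zero hρ (Classical.arbitrary _)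
      fun _ r hr => absurd r.isLt hr.not_gt⟩
  exact csSup_le_csSup' bdd fun _ hρ d hd => h d (hρ d hd)

theorem rho_submatrix_castLE_le [Nonempty (Fin s)] (hn : n ≤ m) :
    rho (fun j => (C j).submatrix (Fin.castLE hn) (Fin.castLE hn)) ≤ rho C :=
  rho_le_rho_of_rowsLI_imp fun _ h => h.of_submatrix_castLE hn

end Rho

theorem col_reduced_rho_eq_of_t_zero_general {b s m : ℕ} [Nontrivial (ZMod b)]
    (C : Fin s → Matrix ℕ ℕ (ZMod b)) (w : Fin s → ℕ) (l : Fin s) (hl : ∀ j, w j ≤ w l)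
    (hC : rho (fun j => upperLeft (C j) (m - w l)) = m - w l) :
    rho (fun j => colReduce (upperLeft (C j) m) (w j)) = m - w l := by
  have : Nonempty (Fin s) := ⟨l⟩
  have hn : m - w l ≤ m := Nat.sub_le m (w l)
  have blocks_eq (j : Fin s) :=
    submatrix_castLE_colReduce_upperLeft (C j) (Nat.sub_le_sub_left (hl j) m)
  apply le_antisymm
  · exact rho_le_of_col_eq_zero l fun i _ hr => colReduce_apply_of_le _ i hr
  · calc m - w l = rho (fun j => upperLeft (C j) (m - w l)) := hC.symm
      _ = rho (fun j => (colReduce (upperLeft (C j) m) (w j)).submatrix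
            (Fin.castLE hn) (Fin.castLE hn)) := by simp only [blocks_eq]
      _ ≤ rho (fun j => colReduce (upperLeft (C j) m) (w j)) := rho_submatrix_castLE_le hn

/-- Remark after Theorem 1: for a digital `(0,s)`-sequence and reduction indices
`0 = w_1 ≤ … ≤ w_s` with `w_s < m`, one has
`ρ_m(C̃_1^{(m)}, …, C̃_s^{(m)}) = m - w_s`. -/
theorem col_reduced_rho_eq_of_t_zero {b s m : ℕ} (hb : b.Prime) (hs : 1 ≤ s) (hm : 1 ≤ m)
    (C : Fin s → Matrix ℕ ℕ (ZMod b))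
    (hC : ∀ k : ℕ, 1 ≤ k → rho (fun j => upperLeft (C j) k) = k)
    (w : Fin s → ℕ) (hw0 : w ⟨0, by omega⟩ = 0) (hwmono : Monotone w)
    (hws : w ⟨s - 1, by omega⟩ < m) :
    rho (fun j => colReduce (upperLeft (C j) m) (w j)) = m - w ⟨s - 1, by omega⟩ := by
  have : Fact b.Prime := ⟨hb⟩
  exact col_reduced_rho_eq_of_t_zero_general C w _
    (fun j => hwmono (Fin.le_def.mpr (Nat.le_sub_one_of_lt j.isLt)))
    (hC _ (Nat.sub_pos_of_lt hws))
end

section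
/- Let b ≥ 2 and s ≥ 1 be integers, let γ_1 ≥ γ_2 ≥ ⋯ ≥ γ_s > 0 be reals, and let j_0 ∈ {0,1,…,s} be such that γ_j ≥ 1 for all j ≤ j_0 and γ_j ≤ 1 for all j > j_0. Let κ be a real number with κ > γ_1^{j_0}, and let w_1,…,w_s be nonnegative integers satisfying γ_j b^{w_j} ≤ (κ / γ_1^{j_0})^{1/s} − 1 for every j ∈ {1,…,s}. Then ∏_{j=1}^{s} γ_j (1 + b^{w_j}) ≤ κ. -/
open Finset

/-!
For `x ≥ 0` one has `γ * (1 + x) ≤ max γ 1 * (1 + γ * x)`: if `γ ≥ 1` the spare factor `γ` can be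
put on `x`, and if `γ ≤ 1` the summand `γ` is replaced by `1`. In the product over all indices the
factors `max (γ j) 1` contribute at most `γ 1 ^ j₀`, since only the first `j₀` of them can exceed
`1`, while each `1 + γ j * b ^ w j` is at most the `s`-th root of `κ / γ 1 ^ j₀`.
-/

theorem mul_one_add_le_max_one_mul {R : Type*} [Semiring R] [LinearOrder R] [IsOrderedRing R]
    {c x : R} (hx : 0 ≤ x) : c * (1 + x) ≤ max c 1 * (1 + c * x) := by
  rcases le_total 1 c with hc | hc
  · rw [max_eq_left hc]
    have hxc : x ≤ c * x := le_mul_of_one_le_left hx hc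
    have hc₀ : 0 ≤ c := zero_le_one.trans hc
    gcongr
  · rw [max_eq_right hc, one_mul, mul_add, mul_one]
    gcongr

section OrderedSemiring

variable {ι R : Type*} [CommSemiring R] [LinearOrder R] [IsOrderedRing R]

theorem prod_mul_one_add_le_prod_max_one_mul {S : Finset ι} {γ x : ι → R}
    (hγ : ∀ i ∈ S, 0 ≤ γ i) (hx : ∀ i ∈ S, 0 ≤ x i) :
    ∏ i ∈ S, γ i * (1 + x i) ≤ (∏ i ∈ S, max (γ i) 1) * ∏ i ∈ S, (1 + γ i * x i) := by
  rw [← prod_mul_distrib]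
  exact prod_le_prod (fun i hi ↦ mul_nonneg (hγ i hi) (add_nonneg zero_le_one (hx i hi)))
    fun i hi ↦ mul_one_add_le_max_one_mul (hx i hi)

theorem prod_max_one_le_pow_card {S T : Finset ι} {γ : ι → R} {g : R} (hTS : T ⊆ S)
    (hT : ∀ i ∈ T, max (γ i) 1 ≤ g) (hST : ∀ i ∈ S, i ∉ T → γ i ≤ 1) :
    ∏ i ∈ S, max (γ i) 1 ≤ g ^ #T := by
  calc ∏ i ∈ S, max (γ i) 1
      = ∏ i ∈ T, max (γ i) 1 :=
        (prod_subset hTS fun i hi hiT ↦ max_eq_right (hST i hi hiT)).symm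
    _ ≤ ∏ _i ∈ T, g := prod_le_prod (fun _ _ ↦ le_max_of_le_right zero_le_one) hT
    _ = g ^ #T := prod_const g

end OrderedSemiring

theorem prod_le_of_le_rpow_one_div_card {ι : Type*} {S : Finset ι} (hS : S.Nonempty)
    {f : ι → ℝ} {a : ℝ} (ha : 0 ≤ a) (hf₀ : ∀ i ∈ S, 0 ≤ f i)
    (hf : ∀ i ∈ S, f i ≤ a ^ ((1 : ℝ) / #S)) : ∏ i ∈ S, f i ≤ a := by
  calc ∏ i ∈ S, f i
      ≤ ∏ _i ∈ S, a ^ ((1 : ℝ) / #S) := prod_le_prod hf₀ hf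
    _ = (a ^ ((1 : ℝ) / #S)) ^ #S := prod_const _
    _ = a := by rw [one_div, Real.rpow_inv_natCast_pow ha hS.card_ne_zero]

theorem weight_product_kappa_bound_general {ι : Type*} {S : Finset ι} (hS : S.Nonempty)
    {γ x : ι → ℝ} {G κ : ℝ} (hγ : ∀ i ∈ S, 0 ≤ γ i) (hx : ∀ i ∈ S, 0 ≤ x i)
    (hG : ∏ i ∈ S, max (γ i) 1 ≤ G) (hκ : 0 ≤ κ)
    (hroot : ∀ i ∈ S, γ i * x i ≤ (κ / G) ^ ((1 : ℝ) / #S) - 1) :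
    ∏ i ∈ S, γ i * (1 + x i) ≤ κ := by
  have hG₀ : 0 < G := (prod_pos fun _ _ ↦ lt_max_of_lt_right one_pos).trans_le hG
  have hfactor : ∀ i ∈ S, 0 ≤ 1 + γ i * x i := fun i hi ↦
    add_nonneg zero_le_one (mul_nonneg (hγ i hi) (hx i hi))
  calc ∏ i ∈ S, γ i * (1 + x i)
      ≤ (∏ i ∈ S, max (γ i) 1) * ∏ i ∈ S, (1 + γ i * x i) :=
        prod_mul_one_add_le_prod_max_one_mul hγ hx
    _ ≤ G * (κ / G) :=
        mul_le_mul hG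
          (prod_le_of_le_rpow_one_div_card hS (div_nonneg hκ hG₀.le) hfactor
            fun i hi ↦ le_sub_iff_add_le'.1 (hroot i hi))
          (prod_nonneg hfactor) hG₀.le
    _ = κ := mul_div_cancel₀ κ hG₀.ne'

/-- Sufficiency of the choice of reduction indices: for product weights
`γ_1 ≥ γ_2 ≥ ⋯ ≥ γ_s > 0` with `γ_j ≥ 1` for `j ≤ j_0` and `γ_j ≤ 1` for `j > j_0`,
and `κ > γ_1^{j_0}`, if the reduction indices satisfy
`γ_j b^{w_j} ≤ (κ / γ_1^{j_0})^{1/s} - 1` for all `j`, then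
`∏_{j=1}^{s} γ_j (1 + b^{w_j}) ≤ κ`. -/
theorem weight_product_kappa_bound {b s j₀ : ℕ} (hb : 2 ≤ b) (hs : 1 ≤ s) (hj₀ : j₀ ≤ s)
    (γ : ℕ → ℝ) (hpos : ∀ j ∈ Finset.Icc 1 s, 0 < γ j)
    (hmono : ∀ i j : ℕ, 1 ≤ i → i ≤ j → j ≤ s → γ j ≤ γ i)
    (hge : ∀ j : ℕ, 1 ≤ j → j ≤ j₀ → 1 ≤ γ j)
    (hle : ∀ j : ℕ, j₀ < j → j ≤ s → γ j ≤ 1)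
    (κ : ℝ) (hκ : γ 1 ^ j₀ < κ)
    (w : ℕ → ℕ)
    (hw : ∀ j ∈ Finset.Icc 1 s,
      γ j * (b : ℝ) ^ (w j) ≤ (κ / γ 1 ^ j₀) ^ ((1 : ℝ) / s) - 1) :
    ∏ j ∈ Finset.Icc 1 s, γ j * (1 + (b : ℝ) ^ (w j)) ≤ κ := by
  have hmax : ∏ j ∈ Icc 1 s, max (γ j) 1 ≤ γ 1 ^ #(Icc 1 j₀) :=
    prod_max_one_le_pow_card (Icc_subset_Icc_right hj₀) (by grind) (by grind)
  exact weight_product_kappa_bound_general (nonempty_Icc.2 hs) (fun j hj ↦ (hpos j hj).le)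
    (fun j _ ↦ by positivity) (by simpa using hmax)
    ((pow_pos (hpos 1 (left_mem_Icc.2 hs)) j₀).trans hκ).le (by simpa using hw)
end
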